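/- Assume (H1) for f, g ∈ L¹(0,1) with g ≥ 0 a.e., and k : [0,1]² → [0,∞) continuous, and let Tu(t) = ∫₀¹ k(t,s)g(s)f(s,u(s)) ds. Let K₂ be a bounded subset of the cone K on which g(t)f(t,u) ≤ M(t) a.e. for some M ∈ L¹(0,1) and all u ∈ K₂ with values in the relevant range. If u ∈ K₂ is such that m({t ∈ I_n : u(t) = γ_n(t)}) = 0 for every n ∈ ℕ, where (γ_n : I_n → [0,∞)) are curves such that for a.e. t ∈ [0,1] the map v ↦ f(t,v) is continuous on [0,∞) \ ⋃_{n : t ∈ I_n}{γ_n(t)}, then T is continuous at u: for every sequence u_k → u uniformly with u_k ∈ K₂, one has Tu_k → Tu uniformly on [0,1]. -/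

import Mathlib

open Set Metric MeasureTheory Filter Topology

/-- Extension of a continuous function on `[0,1]` to all of `ℝ`. -/
noncomputable def uext (u : C(Icc (0:ℝ) 1, ℝ)) : ℝ → ℝ :=
  IccExtend zero_le_one ⇑u

/-- Value of the Hammerstein operator: `Tu(t) = ∫₀¹ k(t,s) g(s) f(s,u(s)) ds`. -/
noncomputable def hamVal (k : ℝ → ℝ → ℝ) (g : ℝ → ℝ) (f : ℝ → ℝ → ℝ)
    (u : C(Icc (0:ℝ) 1, ℝ)) (t : ℝ) : ℝ :=
  ∫ s in Icc (0:ℝ) 1, k t s * g s * f s (uext u s)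

/-- The cone `K = {u ∈ C([0,1]) : u ≥ 0, min_{t ∈ [a,b]} u(t) ≥ c‖u‖}`. -/
def coneK (a b c : ℝ) : Set C(Icc (0:ℝ) 1, ℝ) :=
  {u | (∀ t, 0 ≤ u t) ∧ ∀ t : Icc (0:ℝ) 1, (t:ℝ) ∈ Icc a b → c * ‖u‖ ≤ u t}

/-!
Since the kernel is bounded, `Tu_j → Tu` uniformly as soon as `g f(·, u_j) → g f(·, u)` in `L¹`.
Dominated convergence gives the latter: countably many null sets form a null set, so for almost
every `s` the value `u s` lies on none of the curves, hence is a continuity point of `f s`.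
-/

section KernelIntegral

variable {α G : Type*} [MeasurableSpace α] {μ : Measure α} [NormedAddCommGroup G]

theorem tendsto_integral_norm_sub_of_dominated {J : Type*} {l : Filter J}
    [l.IsCountablyGenerated] {φ : J → α → G} {ψ : α → G} {bound : α → ℝ}
    (hφ_meas : ∀ᶠ j in l, AEStronglyMeasurable (φ j) μ) (hψ : Integrable ψ μ)
    (hbound : Integrable bound μ) (hφ_le : ∀ᶠ j in l, ∀ᵐ s ∂μ, ‖φ j s‖ ≤ bound s)
    (hlim : ∀ᵐ s ∂μ, Tendsto (fun j => φ j s) l (𝓝 (ψ s))) :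
    Tendsto (fun j => ∫ s, ‖φ j s - ψ s‖ ∂μ) l (𝓝 0) := by
  rw [← integral_zero α ℝ (μ := μ)]
  refine tendsto_integral_filter_of_dominated_convergence (fun s => bound s + ‖ψ s‖)
    (hφ_meas.mono fun j hj => (hj.sub hψ.aestronglyMeasurable).norm) ?_ (hbound.add hψ.norm) ?_
  · filter_upwards [hφ_le] with j hj
    filter_upwards [hj] with s hs
    rw [norm_norm]
    exact (norm_sub_le _ _).trans (by gcongr)
  · filter_upwards [hlim] with s hs using tendsto_iff_norm_sub_tendsto_zero.1 hs

variable [NormedSpace ℝ G] {𝕜 : Type*} [NormedRing 𝕜] [Module 𝕜 G] [IsBoundedSMul 𝕜 G]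

theorem norm_integral_smul_sub_integral_smul_le {k : α → 𝕜} {φ ψ : α → G} {C : ℝ}
    (hk_meas : AEStronglyMeasurable k μ) (hk_le : ∀ᵐ s ∂μ, ‖k s‖ ≤ C)
    (hφ : Integrable φ μ) (hψ : Integrable ψ μ) :
    ‖(∫ s, k s • φ s ∂μ) - ∫ s, k s • ψ s ∂μ‖ ≤ C * ∫ s, ‖φ s - ψ s‖ ∂μ := by
  have hkφ : Integrable (fun s => k s • φ s) μ := hφ.bdd_smul C hk_meas hk_le
  have hkψ : Integrable (fun s => k s • ψ s) μ := hψ.bdd_smul C hk_meas hk_le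
  rw [← integral_sub hkφ hkψ, ← integral_const_mul]
  refine norm_integral_le_of_norm_le ((hφ.sub hψ).norm.const_mul C) ?_
  filter_upwards [hk_le] with s hs
  calc ‖k s • φ s - k s • ψ s‖ = ‖k s • (φ s - ψ s)‖ := by rw [smul_sub]
    _ ≤ ‖k s‖ * ‖φ s - ψ s‖ := norm_smul_le _ _
    _ ≤ C * ‖φ s - ψ s‖ := by gcongr

theorem tendstoUniformlyOn_integral_smul {X J : Type*} {S : Set X} {l : Filter J}
    {k : X → α → 𝕜} {φ : J → α → G} {ψ : α → G} {C : ℝ}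
    (hk_meas : ∀ t ∈ S, AEStronglyMeasurable (k t) μ) (hk_le : ∀ t ∈ S, ∀ᵐ s ∂μ, ‖k t s‖ ≤ C)
    (hφ : ∀ᶠ j in l, Integrable (φ j) μ) (hψ : Integrable ψ μ)
    (hlim : Tendsto (fun j => ∫ s, ‖φ j s - ψ s‖ ∂μ) l (𝓝 0)) :
    TendstoUniformlyOn (fun j t => ∫ s, k t s • φ j s ∂μ) (fun t => ∫ s, k t s • ψ s ∂μ) l S := by
  rw [Metric.tendstoUniformlyOn_iff]
  intro ε hε
  have hlimC : Tendsto (fun j => C * ∫ s, ‖φ j s - ψ s‖ ∂μ) l (𝓝 0) := by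
    simpa only [mul_zero] using hlim.const_mul C
  filter_upwards [hlimC.eventually_lt_const hε, hφ] with j hj hφj t ht
  rw [dist_comm, dist_eq_norm]
  exact (norm_integral_smul_sub_integral_smul_le (hk_meas t ht) (hk_le t ht) hφj hψ).trans_lt hj

end KernelIntegral

theorem ae_continuousWithinAt_of_null_crossings {ι α E G : Type*} [Countable ι]
    [MeasurableSpace α] {μ : Measure α} [TopologicalSpace E] [TopologicalSpace G]
    {f : α → E → G} {D : Set E} {I : ι → Set α} {γ : ι → α → E} {w : α → E}
    (hcont_off : ∀ᵐ s ∂μ, ∀ v ∈ D, (∀ n, s ∈ I n → v ≠ γ n s) → ContinuousWithinAt (f s) D v)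
    (hw : ∀ᵐ s ∂μ, w s ∈ D) (hnull : ∀ n, μ {s ∈ I n | w s = γ n s} = 0) :
    ∀ᵐ s ∂μ, ContinuousWithinAt (f s) D (w s) := by
  have havoid : ∀ᵐ s ∂μ, ∀ n, s ∉ {s ∈ I n | w s = γ n s} :=
    ae_all_iff.2 fun n => measure_eq_zero_iff_ae_notMem.1 (hnull n)
  filter_upwards [hcont_off, hw, havoid] with s hs hws hne
  exact hs (w s) hws fun n hn heq => hne n ⟨hn, heq⟩

theorem continuous_uext (u : C(Icc (0 : ℝ) 1, ℝ)) : Continuous (uext u) :=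
  u.continuous.Icc_extend'

theorem continuous_uext_apply (s : ℝ) : Continuous fun u => uext u s :=
  continuous_eval_const (F := C(Icc (0 : ℝ) 1, ℝ)) (projIcc 0 1 zero_le_one s)

theorem uext_mem {u : C(Icc (0 : ℝ) 1, ℝ)} {D : Set ℝ} (hu : ∀ t, u t ∈ D) (s : ℝ) : uext u s ∈ D :=
  hu _

theorem continuousWithinAt_comp_uext {G : Type*} [TopologicalSpace G] {h : ℝ → G} {D : Set ℝ}
    {A : Set C(Icc (0 : ℝ) 1, ℝ)} {u : C(Icc (0 : ℝ) 1, ℝ)} {s : ℝ}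
    (hh : ContinuousWithinAt h D (uext u s)) (hA : ∀ v ∈ A, ∀ t, v t ∈ D) :
    ContinuousWithinAt (fun v => h (uext v s)) A u :=
  ContinuousWithinAt.comp (f := fun v => uext v s) hh
    (continuous_uext_apply s).continuousWithinAt fun v hv => uext_mem (hA v hv) s

theorem ae_norm_mul_comp_uext_le {f : ℝ → ℝ → ℝ} {g M : ℝ → ℝ} {v : C(Icc (0 : ℝ) 1, ℝ)}
    (hf_nonneg : ∀ t ∈ Icc 0 1, ∀ y, 0 ≤ y → 0 ≤ f t y)
    (hg_nonneg : ∀ᵐ s ∂volume.restrict (Icc 0 1), 0 ≤ g s) (hv : ∀ t, 0 ≤ v t)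
    (hdom : ∀ᵐ s ∂volume.restrict (Icc 0 1), g s * f s (uext v s) ≤ M s) :
    ∀ᵐ s ∂volume.restrict (Icc 0 1), ‖g s * f s (uext v s)‖ ≤ M s := by
  filter_upwards [hg_nonneg, hdom, ae_restrict_mem measurableSet_Icc] with s hg hle hs
  have hf : 0 ≤ f s (uext v s) := hf_nonneg s hs _ (uext_mem (D := Ici 0) hv s)
  rwa [Real.norm_of_nonneg (mul_nonneg hg hf)]

theorem hammerstein_continuous_at_general {ι : Type*} [Countable ι]
    {f : ℝ → ℝ → ℝ} {g : ℝ → ℝ} {k : ℝ → ℝ → ℝ} {C : ℝ} {D : Set ℝ}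
    {K₂ : Set C(Icc (0 : ℝ) 1, ℝ)} {M : ℝ → ℝ} {I : ι → Set ℝ} {γ : ι → ℝ → ℝ}
    {u : C(Icc (0 : ℝ) 1, ℝ)}
    (hf_meas : ∀ v ∈ K₂, AEStronglyMeasurable (fun s => f s (uext v s)) (volume.restrict (Icc 0 1)))
    (hg_meas : AEStronglyMeasurable g (volume.restrict (Icc 0 1)))
    (hk_meas : ∀ t ∈ Icc 0 1, AEStronglyMeasurable (k t) (volume.restrict (Icc 0 1)))
    (hk_le : ∀ t ∈ Icc 0 1, ∀ᵐ s ∂volume.restrict (Icc 0 1), ‖k t s‖ ≤ C)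
    (hK₂ : ∀ v ∈ K₂, ∀ t, v t ∈ D)
    (hM_int : IntegrableOn M (Icc (0 : ℝ) 1))
    (hdom : ∀ v ∈ K₂, ∀ᵐ s ∂volume.restrict (Icc 0 1), ‖g s * f s (uext v s)‖ ≤ M s)
    (hcont_off : ∀ᵐ s ∂volume.restrict (Icc 0 1), ∀ y ∈ D,
      (∀ n, s ∈ I n → y ≠ γ n s) → ContinuousWithinAt (f s) D y)
    (hu : u ∈ K₂)
    (hnull : ∀ n, volume.restrict (Icc 0 1) {s ∈ I n | uext u s = γ n s} = 0) :
    TendstoUniformlyOn (hamVal k g f) (hamVal k g f u) (𝓝[K₂] u) (Icc (0 : ℝ) 1) := by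
  have hmeas : ∀ v ∈ K₂, AEStronglyMeasurable (fun s => g s * f s (uext v s))
      (volume.restrict (Icc 0 1)) := fun v hv => hg_meas.mul (hf_meas v hv)
  have hint : ∀ v ∈ K₂, Integrable (fun s => g s * f s (uext v s))
      (volume.restrict (Icc 0 1)) := fun v hv => hM_int.mono' (hmeas v hv) (hdom v hv)
  have hlim : ∀ᵐ s ∂volume.restrict (Icc 0 1),
      Tendsto (fun v => g s * f s (uext v s)) (𝓝[K₂] u) (𝓝 (g s * f s (uext u s))) := by
    filter_upwards [ae_continuousWithinAt_of_null_crossings hcont_off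
      (.of_forall (uext_mem (hK₂ u hu))) hnull] with s hs
    exact (continuousWithinAt_comp_uext hs hK₂).tendsto.const_mul (g s)
  have hL1 := tendsto_integral_norm_sub_of_dominated (eventually_mem_nhdsWithin.mono hmeas)
    (hint u hu) hM_int (eventually_mem_nhdsWithin.mono hdom) hlim
  have hT : hamVal k g f = fun v t => ∫ s in Icc (0 : ℝ) 1, k t s • (g s * f s (uext v s)) := by
    ext v t
    simp only [hamVal, smul_eq_mul, mul_assoc]
  rw [hT]
  exact tendstoUniformlyOn_integral_smul hk_meas hk_le (eventually_mem_nhdsWithin.mono hint)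
    (hint u hu) hL1

/-- If `u ∈ K₂` meets each discontinuity curve `γₙ` only on a null set, then the
Hammerstein operator is continuous at `u`: `u_j → u` uniformly with `u_j ∈ K₂`
implies `Tu_j → Tu` uniformly on `[0,1]`. -/
theorem hammerstein_continuous_at
    (a b c : ℝ) (ha0 : 0 ≤ a) (hab : a ≤ b) (hb1 : b ≤ 1) (hc0 : 0 < c) (hc1 : c ≤ 1)
    (f : ℝ → ℝ → ℝ) (g : ℝ → ℝ) (k : ℝ → ℝ → ℝ)
    -- (H1)
    (hf_nonneg : ∀ t ∈ Icc (0:ℝ) 1, ∀ v, 0 ≤ v → 0 ≤ f t v)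
    (hf_meas : ∀ v : ℝ → ℝ, Continuous v → Measurable fun t => f t (v t))
    (hf_bdd : ∀ r > (0:ℝ), ∃ R > (0:ℝ),
      ∀ᵐ t ∂(volume.restrict (Icc (0:ℝ) 1)), ∀ v ∈ Icc (0:ℝ) r, f t v ≤ R)
    -- `g ∈ L¹(0,1)`, `g ≥ 0` a.e.
    (hg_int : IntegrableOn g (Icc (0:ℝ) 1))
    (hg_nonneg : ∀ᵐ s ∂(volume.restrict (Icc (0:ℝ) 1)), 0 ≤ g s)
    -- kernel
    (hk_cont : ContinuousOn (fun p : ℝ × ℝ => k p.1 p.2) (Icc 0 1 ×ˢ Icc 0 1))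
    (hk_nonneg : ∀ t ∈ Icc (0:ℝ) 1, ∀ s ∈ Icc (0:ℝ) 1, 0 ≤ k t s)
    -- `K₂` a bounded subset of the cone with integrable domination
    (K₂ : Set C(Icc (0:ℝ) 1, ℝ)) (hK₂ : K₂ ⊆ coneK a b c)
    (hK₂_bdd : Bornology.IsBounded K₂)
    (M : ℝ → ℝ) (hM_int : IntegrableOn M (Icc (0:ℝ) 1))
    (hdom : ∀ v ∈ K₂, ∀ᵐ t ∂(volume.restrict (Icc (0:ℝ) 1)),
      g t * f t (uext v t) ≤ M t)
    -- discontinuity curves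
    (aN bN : ℕ → ℝ) (γN : ℕ → ℝ → ℝ)
    (hsub : ∀ n, Icc (aN n) (bN n) ⊆ Icc (0:ℝ) 1)
    (hcont_off : ∀ᵐ t ∂(volume.restrict (Icc (0:ℝ) 1)), ∀ v : ℝ, 0 ≤ v →
      (∀ n, t ∈ Icc (aN n) (bN n) → v ≠ γN n t) →
      ContinuousWithinAt (fun y => f t y) (Ici 0) v)
    -- `u` meets each curve on a null set
    (u : C(Icc (0:ℝ) 1, ℝ)) (hu : u ∈ K₂)
    (hnull : ∀ n, volume {t ∈ Icc (aN n) (bN n) | uext u t = γN n t} = 0) :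
    ∀ uJ : ℕ → C(Icc (0:ℝ) 1, ℝ), (∀ j, uJ j ∈ K₂) →
      Tendsto uJ atTop (𝓝 u) →
      TendstoUniformlyOn (fun j t => hamVal k g f (uJ j) t)
        (fun t => hamVal k g f u t) atTop (Icc (0:ℝ) 1) := by
  intro uJ hJ hlim
  obtain ⟨C, hC⟩ := (isCompact_Icc.prod isCompact_Icc).exists_bound_of_continuousOn hk_cont
  have hcontAt : TendstoUniformlyOn (hamVal k g f) (hamVal k g f u) (𝓝[K₂] u) (Icc 0 1) :=
    hammerstein_continuous_at_general (D := Ici 0)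
      (fun v _ => (hf_meas _ (continuous_uext v)).aestronglyMeasurable)
      hg_int.aestronglyMeasurable
      (fun t ht => (hk_cont.uncurry_left t ht).aestronglyMeasurable measurableSet_Icc)
      (fun t ht => ae_restrict_of_forall_mem measurableSet_Icc fun s hs => hC (t, s) ⟨ht, hs⟩)
      (fun v hv => (hK₂ hv).1) hM_int
      (fun v hv => ae_norm_mul_comp_uext_le hf_nonneg hg_nonneg (hK₂ hv).1 (hdom v hv))
      hcont_off hu (fun n => Measure.absolutelyContinuous_of_le Measure.restrict_le_self (hnull n))
  exact hcontAt.seq_tendstoUniformlyOn uJ (tendsto_nhdsWithin_iff.2 ⟨hlim, .of_forall hJ⟩)
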